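/- Let V be a finite set, G a simple graph on V, and let A, B be disjoint sets with A ∪ B = V. Let T ≥ 0 be a real number, let f₊, f₋ : V → ℝ, and set h = f₊ − f₋. Define score(A,B) = T·(e_G(A) + e_G(B)) + Σ_{i ∈ A} f₊(i) + Σ_{j ∈ B} f₋(j). Suppose there exist i ∈ A and j ∈ B such that T·(e_G(i,B) − e_G(i,A)) − h(i) ≥ T and T·(e_G(j,A) − e_G(j,B)) + h(j) ≥ T. Then, with Â = (A \ {i}) ∪ {j} and B̂ = (B \ {j}) ∪ {i}, one has score(Â, B̂) ≥ score(A, B). -/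

import Mathlib

open Finset

/-- Number of edges of `G` with both endpoints in `A`
(counted as ordered adjacent pairs, halved). -/
def edgesWithin {V : Type*} [DecidableEq V] (G : SimpleGraph V) [DecidableRel G.Adj]
    (A : Finset V) : ℕ :=
  ((A ×ˢ A).filter (fun p => G.Adj p.1 p.2)).card / 2

/-- Number of edges of `G` between the vertex `v` and the vertices of `S`. -/
def edgesBetween {V : Type*} (G : SimpleGraph V) [DecidableRel G.Adj]
    (v : V) (S : Finset V) : ℕ :=
  (S.filter (fun u => G.Adj v u)).card

/-- The score of the partition `(A,B)` with general side-information log-likelihoods: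
`T·(e_G(A)+e_G(B)) + Σ_{i ∈ A} f₊(i) + Σ_{j ∈ B} f₋(j)`. -/
def scoreGen {V : Type*} [DecidableEq V] (G : SimpleGraph V) [DecidableRel G.Adj]
    (T : ℝ) (fplus fminus : V → ℝ) (A B : Finset V) : ℝ :=
  T * ((edgesWithin G A : ℝ) + (edgesWithin G B : ℝ))
    + ∑ i ∈ A, fplus i + ∑ j ∈ B, fminus j

theorem edgesWithin_insert_aux {V : Type*} [DecidableEq V] (G : SimpleGraph V)
    [DecidableRel G.Adj] (v : V) (S : Finset V) (hv : v ∉ S) :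
    edgesWithin G (insert v S) = edgesWithin G S + edgesBetween G v S := by
  unfold edgesWithin edgesBetween
  have key : (((insert v S) ×ˢ (insert v S)).filter (fun p => G.Adj p.1 p.2)).card
      = ((S ×ˢ S).filter (fun p => G.Adj p.1 p.2)).card
        + (S.filter (fun u => G.Adj v u)).card * 2 := by
    simp only [Finset.card_filter, Finset.sum_product, Finset.sum_insert hv,
      Finset.sum_add_distrib, G.loopless.irrefl, if_false, G.adj_comm _ v]
    ring
  rw [key]
  omega

theorem edgesBetween_insert_self_aux {V : Type*} [DecidableEq V] (G : SimpleGraph V)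
    [DecidableRel G.Adj] (v : V) (S : Finset V) :
    edgesBetween G v (insert v S) = edgesBetween G v S := by
  simp [edgesBetween, Finset.filter_insert]

theorem edgesBetween_insert_le_aux {V : Type*} [DecidableEq V] (G : SimpleGraph V)
    [DecidableRel G.Adj] (v u : V) (S : Finset V) :
    edgesBetween G v (insert u S) ≤ edgesBetween G v S + 1 := by
  unfold edgesBetween
  rw [Finset.filter_insert]
  split_ifs
  · exact Finset.card_insert_le _ _
  · omega

theorem swap_increases_score_general_side_info
    {V : Type*} [Fintype V] [DecidableEq V]
    (G : SimpleGraph V) [DecidableRel G.Adj]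
    (A B : Finset V) (hdisj : Disjoint A B) (hcover : A ∪ B = Finset.univ)
    (T : ℝ) (hT : 0 ≤ T)
    (fplus fminus : V → ℝ) (h : V → ℝ) (hdef : h = fplus - fminus)
    (i j : V) (hi : i ∈ A) (hj : j ∈ B)
    (h1 : T * ((edgesBetween G i B : ℝ) - (edgesBetween G i A : ℝ)) - h i ≥ T)
    (h2 : T * ((edgesBetween G j A : ℝ) - (edgesBetween G j B : ℝ)) + h j ≥ T) :
    scoreGen G T fplus fminus (insert j (A.erase i)) (insert i (B.erase j))
      ≥ scoreGen G T fplus fminus A B := by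
  obtain ⟨A₀, hiA, rfl⟩ : ∃ A₀, i ∉ A₀ ∧ A = insert i A₀ :=
    ⟨A.erase i, Finset.notMem_erase _ _, (Finset.insert_erase hi).symm⟩
  obtain ⟨B₀, hjB, rfl⟩ : ∃ B₀, j ∉ B₀ ∧ B = insert j B₀ :=
    ⟨B.erase j, Finset.notMem_erase _ _, (Finset.insert_erase hj).symm⟩
  have hjA : j ∉ A₀ := fun hh =>
    Finset.disjoint_left.mp hdisj (Finset.mem_insert_of_mem hh) hj
  have hiB : i ∉ B₀ := fun hh =>
    Finset.disjoint_left.mp hdisj hi (Finset.mem_insert_of_mem hh)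
  rw [Finset.erase_insert hiA, Finset.erase_insert hjB]
  unfold scoreGen
  rw [edgesBetween_insert_self_aux] at h1 h2
  rw [edgesWithin_insert_aux G _ _ hiA, edgesWithin_insert_aux G _ _ hjB,
    edgesWithin_insert_aux G _ _ hjA, edgesWithin_insert_aux G _ _ hiB,
    Finset.sum_insert hiA, Finset.sum_insert hiB, Finset.sum_insert hjA, Finset.sum_insert hjB]
  have e1 : (edgesBetween G i (insert j B₀) : ℝ) ≤ edgesBetween G i B₀ + 1 := by
    exact_mod_cast edgesBetween_insert_le_aux G i j B₀
  have e2 : (edgesBetween G j (insert i A₀) : ℝ) ≤ edgesBetween G j A₀ + 1 := by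
    exact_mod_cast edgesBetween_insert_le_aux G j i A₀
  have m1 := mul_le_mul_of_nonneg_left e1 hT
  have m2 := mul_le_mul_of_nonneg_left e2 hT
  subst hdef
  simp only [Pi.sub_apply] at h1 h2
  push_cast
  linarith
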